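/- Let P be a polynomial with real coefficients such that P(0) ≠ 0 and P splits over ℝ (i.e., all of its complex roots are real). Then (coeff₁ P)² - 2 · (coeff₀ P) · (coeff₂ P) ≥ 0, where coeffᵢ P denotes the coefficient of x^i in P. Equivalently, if (coeff₁ P)² - 2 · (coeff₀ P) · (coeff₂ P) < 0 and P(0) ≠ 0, then P has a non-real complex root. -/

import Mathlib

open Polynomial

theorem coeff_ineq_of_splits (P : Polynomial ℝ) (h0 : P.eval 0 ≠ 0)
    (hsplit : (P.map (RingHom.id ℝ)).Splits) :
    (P.coeff 1) ^ 2 - 2 * P.coeff 0 * P.coeff 2 ≥ 0 := by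
  rw [Polynomial.map_id] at hsplit
  clear h0
  unfold Polynomial.Splits at hsplit
  induction hsplit using Submonoid.closure_induction with
  | mem x hx =>
    rcases hx with ⟨a, rfl⟩ | ⟨a, rfl⟩
    · simp [coeff_C]
    · simp [coeff_C, coeff_X]
  | one => simp [coeff_one]
  | mul f g _ _ hf hg =>
    have h1 : (f * g).coeff 1 = f.coeff 0 * g.coeff 1 + f.coeff 1 * g.coeff 0 := by
      simp [coeff_mul, Finset.Nat.antidiagonal_succ]
    have h2 : (f * g).coeff 2 =
        f.coeff 0 * g.coeff 2 + f.coeff 1 * g.coeff 1 + f.coeff 2 * g.coeff 0 := by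
      simp [coeff_mul, Finset.Nat.antidiagonal_succ]
      ring
    rw [h1, h2, mul_coeff_zero]
    have e1 := mul_nonneg (sq_nonneg (f.coeff 0)) hg
    have e2 := mul_nonneg (sq_nonneg (g.coeff 0)) hf
    nlinarith [e1, e2]
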